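/- arXiv:1109.2176 — 2 statements merged into one kernel-verified Lean document; each statement's English description precedes it below -/
import Mathlib

section
/- Let F be a finite field with q elements, M ≥ 1, d, l natural numbers, and c ∈ F. Let g¹, …, gˡ be multivariate polynomials in M variables over F, each of total degree at most d, such that for every 1 ≤ j ≤ l one has Σ_{b ∈ {0,1}^M} gʲ(b) ≠ c (the sum ranging over all points of F^M whose coordinates lie in {0,1} ⊆ F). Let g : F^M → F be an arbitrary function, and let a table assign to every 0 ≤ j ≤ M−1 and every tuple (a₁,…,a_j) ∈ F^j a univariate polynomial p_{a₁,…,a_j} over F of degree at most d. Then the number of points x = (a₁,…,a_M) ∈ F^M such that the Sum Check Protocol accepts at x and additionally g(x) = gʲ(x) for some 1 ≤ j ≤ l is at most M · d · l · q^{M−1}. -/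
/-!
For a single function `f` of degree at most `d` in each variable, expose the first coordinate `a`.
Acceptance forces `p_∅(0) + p_∅(1) = c`, whereas the polynomial `P(X) = ∑_b f(X, b)`, with `b` in
the Boolean cube of the remaining variables, satisfies `P(0) + P(1) ≠ c`. Hence `p_∅ - P` is a
nonzero polynomial of degree at most `d`, and all but at most `d` values `a` give `p_∅(a) ≠ P(a)`.
For those, the remainder of the run is a sum check on the function `f(a, ·)` whose claimed value
`p_∅(a)` is again wrong, so induction on the number of variables applies (`card_runAccepts_le`).
The exceptional `a` contribute at most `d · q^(M-1)` points. The theorem follows by a union bound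
over the `l` polynomials.
-/

open MvPolynomial Polynomial

/-- The Sum Check Protocol accepts at the random point `x = (a₁, …, a_M)`:
(1) `p_∅(0) + p_∅(1) = c`;
(2) for `1 ≤ j ≤ M-1`, `p_{a₁,…,a_{j-1}}(a_j) = p_{a₁,…,a_j}(0) + p_{a₁,…,a_j}(1)`
    (reindexed with `t = j - 1`);
(3) `p_{a₁,…,a_{M-1}}(a_M) = g(x)`. -/
def SumCheckAccepts {F : Type*} [Field F] (M : ℕ) (hM : 1 ≤ M)
    (p : (j : ℕ) → (Fin j → F) → Polynomial F)
    (g : (Fin M → F) → F) (c : F) (x : Fin M → F) : Prop :=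
  ((p 0 (fun s => s.elim0)).eval 0 + (p 0 (fun s => s.elim0)).eval 1 = c) ∧
  (∀ t : ℕ, ∀ _ht : t < M - 1,
    (p t (fun s : Fin t => x ⟨s, by have := s.2; omega⟩)).eval (x ⟨t, by omega⟩) =
      (p (t + 1) (fun s : Fin (t + 1) => x ⟨s, by have := s.2; omega⟩)).eval 0 +
      (p (t + 1) (fun s : Fin (t + 1) => x ⟨s, by have := s.2; omega⟩)).eval 1) ∧
  ((p (M - 1) (fun s : Fin (M - 1) => x ⟨s, by have := s.2; omega⟩)).eval
      (x ⟨M - 1, by omega⟩) = g x)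

/-- The sum check for `f` with claimed value `c`, recursively in the number of variables: after the
first round the protocol continues with `f` and the table restricted to the first coordinate of `x`,
and the new claimed value is `p_∅ (x 0)`. With no variable left, the claim is compared with `f`. -/
def RunAccepts {F : Type*} [Field F] : (n : ℕ) → (p : (j : ℕ) → (Fin j → F) → Polynomial F) →
    (f : (Fin n → F) → F) → (c : F) → (x : Fin n → F) → Prop
  | 0, _, f, c, x => c = f x
  | n + 1, p, f, c, x =>
      (p 0 Fin.elim0).eval 0 + (p 0 Fin.elim0).eval 1 = c ∧
      RunAccepts n (fun j a => p (j + 1) (Fin.cons (x 0) a)) (fun y => f (Fin.cons (x 0) y))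
        ((p 0 Fin.elim0).eval (x 0)) (Fin.tail x)

/-- The sum of `f` over `{0,1}^n`. -/
def cubeSum {F : Type*} [Field F] (n : ℕ) (f : (Fin n → F) → F) : F :=
  ∑ b : Fin n → Bool, f (fun i => if b i then (1 : F) else 0)

/-- `f` restricts to a univariate polynomial of degree at most `d` on every line parallel to a
coordinate axis. -/
def LineDegreeLE {F : Type*} [Field F] (d n : ℕ) (f : (Fin n → F) → F) : Prop :=
  ∀ (i : Fin n) (x : Fin n → F), ∃ P : Polynomial F,
    P.natDegree ≤ d ∧ ∀ a, P.eval a = f (Function.update x i a)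

theorem cubeSum_succ {F : Type*} [Field F] (n : ℕ) (f : (Fin (n + 1) → F) → F) :
    cubeSum (n + 1) f =
      cubeSum n (fun y => f (Fin.cons 0 y)) + cubeSum n (fun y => f (Fin.cons 1 y)) := by
  unfold cubeSum
  rw [← (Fin.consEquiv (fun _ : Fin (n + 1) => Bool)).sum_comp, Fintype.sum_prod_type,
    Fintype.sum_bool, add_comm]
  congr 1 <;> refine Finset.sum_congr rfl fun b _ => congrArg f (funext fun i => ?_) <;>
    refine Fin.cases ?_ (fun i => ?_) i <;> simp [Fin.consEquiv]

theorem LineDegreeLE.cons {F : Type*} [Field F] {d n : ℕ} {f : (Fin (n + 1) → F) → F}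
    (hf : LineDegreeLE d (n + 1) f) (a : F) : LineDegreeLE d n (fun y => f (Fin.cons a y)) := by
  intro i x
  obtain ⟨P, hP, h⟩ := hf i.succ (Fin.cons a x)
  refine ⟨P, hP, fun b => ?_⟩
  simp only [h, Fin.cons_update]

theorem LineDegreeLE.exists_cubeSum {F : Type*} [Field F] {d n : ℕ} {f : (Fin (n + 1) → F) → F}
    (hf : LineDegreeLE d (n + 1) f) :
    ∃ P : Polynomial F, P.natDegree ≤ d ∧
      ∀ a, P.eval a = cubeSum n (fun y => f (Fin.cons a y)) := by
  choose P hP h using fun y : Fin n → F => hf 0 (Fin.cons 0 y)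
  refine ⟨∑ b : Fin n → Bool, P (fun i => if b i then (1 : F) else 0),
    Polynomial.natDegree_sum_le_of_forall_le _ _ fun b _ => hP _, fun a => ?_⟩
  simp [Polynomial.eval_finsetSum, h, cubeSum, Fin.update_cons_zero]

theorem lineDegreeLE_eval {F : Type*} [Field F] {d n : ℕ} (G : MvPolynomial (Fin n) F)
    (hG : G.totalDegree ≤ d) : LineDegreeLE d n (fun x => MvPolynomial.eval x G) := by
  intro i x
  refine ⟨MvPolynomial.aeval (Function.update (fun k => Polynomial.C (x k)) i Polynomial.X) G,
    ?_, fun a => ?_⟩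
  · refine (MvPolynomial.aeval_natDegree_le G hG (n := 1) _ fun k => ?_).trans (by simp)
    by_cases hk : k = i
    · subst hk; simp
    · simp [hk]
  · rw [← Polynomial.coe_evalRingHom, MvPolynomial.aeval_def, MvPolynomial.hom_eval₂]
    change _ = MvPolynomial.eval₂ (RingHom.id F) (Function.update x i a) G
    congr 1
    · ext; simp
    · funext k
      by_cases hk : k = i
      · subst hk; simp
      · simp [hk]

/-- Acceptance unfolds round by round, and agreement of `g` with `f` at `x` lets the last
comparison be made with `f`. -/
theorem runAccepts_of_sumCheckAccepts {F : Type*} [Field F] (n : ℕ)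
    (p : (j : ℕ) → (Fin j → F) → Polynomial F) (g f : (Fin (n + 1) → F) → F) (c : F)
    (x : Fin (n + 1) → F) (h : SumCheckAccepts (n + 1) (Nat.le_add_left 1 n) p g c x)
    (hx : g x = f x) : RunAccepts (n + 1) p f c x := by
  induction n generalizing c p with
  | zero =>
    obtain ⟨h1, -, h3⟩ := h
    refine ⟨?_, ?_⟩
    · convert h1
    · rw [hx] at h3
      simp only [RunAccepts, Fin.cons_self_tail]
      rw [← h3]
      exact congrArg (fun a => (p 0 a).eval (x 0)) (Subsingleton.elim _ _)
  | succ n ih =>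
    obtain ⟨h1, h2, h3⟩ := h
    -- A prefix of `x` of positive length is `x 0` followed by a prefix of the tail.
    have key : ∀ (t : ℕ) (ht : t + 1 ≤ n + 2),
        (fun s : Fin (t + 1) => x ⟨s, by have := s.2; omega⟩) =
        (Fin.cons (x 0) (fun s : Fin t => Fin.tail x ⟨s, by have := s.2; omega⟩) :
          Fin (t + 1) → F) := by
      intro t ht
      funext s
      refine Fin.cases ?_ (fun s => ?_) s <;> rfl
    refine ⟨by convert h1, ih _ (fun y => g (Fin.cons (x 0) y)) _ _ _ ⟨?_, ?_, ?_⟩ ?_⟩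
    · have := h2 0 (by omega)
      rw [key 0 (by omega), Subsingleton.elim
        (fun s : Fin 0 => Fin.tail x ⟨s, by have := s.2; omega⟩) (fun s => s.elim0)] at this
      refine this.symm.trans ?_
      exact congrArg (fun a => (p 0 a).eval (x 0)) (Subsingleton.elim _ _)
    · intro t ht
      have := h2 (t + 1) (by omega)
      rw [key t (by omega), key (t + 1) (by omega)] at this
      exact this
    · simp only [Fin.cons_self_tail]
      rw [← h3]
      exact (congrArg (fun a => (p (n + 1) a).eval (x ⟨n + 1, by omega⟩))
        (key n (by omega))).symm
    · simpa using hx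

open Classical in
theorem card_runAccepts_le {F : Type*} [Field F] [Fintype F] (d n : ℕ)
    (p : (j : ℕ) → (Fin j → F) → Polynomial F)
    (hp : ∀ j < n, ∀ a : Fin j → F, (p j a).natDegree ≤ d)
    (f : (Fin n → F) → F) (hf : LineDegreeLE d n f) (c : F) (hc : cubeSum n f ≠ c) :
    (Finset.univ.filter (RunAccepts n p f c)).card ≤ n * d * Fintype.card F ^ (n - 1) := by
  induction n generalizing c p with
  | zero =>
    simp only [zero_mul, Nat.le_zero, Finset.card_eq_zero, Finset.filter_eq_empty_iff]
    intro x _ h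
    apply hc
    simp only [RunAccepts] at h
    rw [h]
    simp only [cubeSum, Finset.univ_unique, Finset.sum_singleton]
    exact congrArg f (Subsingleton.elim _ _)
  | succ n ih =>
    by_cases h0 : (p 0 Fin.elim0).eval 0 + (p 0 Fin.elim0).eval 1 = c
    swap
    · rw [Finset.filter_eq_empty_iff.mpr fun x _ h => h0 h.1]
      simp
    obtain ⟨P, hPd, hP⟩ := hf.exists_cubeSum
    set D : Polynomial F := p 0 Fin.elim0 - P with hD
    have hDd : D.natDegree ≤ d :=
      (Polynomial.natDegree_sub_le _ _).trans (max_le (hp 0 (by omega) _) hPd)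
    have hD0 : D ≠ 0 := by
      intro h
      rw [hD, sub_eq_zero] at h
      apply hc
      rw [cubeSum_succ, ← hP, ← hP, ← h0, h]
    have hroots : (Finset.univ.filter fun a => D.eval a = 0).card ≤ d := by
      refine le_trans ?_ ((Polynomial.card_roots' D).trans hDd)
      refine le_trans (Finset.card_le_card ?_) (Multiset.toFinset_card_le D.roots)
      intro a ha
      simpa [hD0] using ha
    have hstep : ∀ a : F, (Finset.univ.filter (RunAccepts n
        (fun j b => p (j + 1) (Fin.cons a b)) (fun y => f (Fin.cons a y))
        ((p 0 Fin.elim0).eval a))).card ≤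
        (if D.eval a = 0 then Fintype.card F ^ n else 0) +
          n * d * Fintype.card F ^ (n - 1) := by
      intro a
      split_ifs with ha
      · exact le_add_right ((Finset.card_le_univ _).trans (by simp))
      · rw [zero_add]
        refine ih _ (fun j hj b => hp (j + 1) (by omega) _) _ (hf.cons a) _ ?_
        rw [← hP]
        intro h
        apply ha
        rw [hD, Polynomial.eval_sub, h, sub_self]
    have hcard : (Finset.univ.filter (RunAccepts (n + 1) p f c)).card =
        ∑ a : F, (Finset.univ.filter (RunAccepts n
          (fun j b => p (j + 1) (Fin.cons a b)) (fun y => f (Fin.cons a y))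
          ((p 0 Fin.elim0).eval a))).card := by
      simp only [Finset.card_filter]
      rw [← (Fin.consEquiv (fun _ : Fin (n + 1) => F)).sum_comp, Fintype.sum_prod_type]
      simp [RunAccepts, h0, Fin.consEquiv]
    rw [hcard]
    refine (Finset.sum_le_sum fun a _ => hstep a).trans ?_
    rw [Finset.sum_add_distrib, ← Finset.sum_filter, Finset.sum_const, Finset.sum_const,
      Finset.card_univ, smul_eq_mul, smul_eq_mul, Nat.add_sub_cancel]
    -- For `n = 0` the exponent `n - 1` truncates, but the factor `n` vanishes.
    have hq : Fintype.card F * (n * d * Fintype.card F ^ (n - 1)) =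
        n * d * Fintype.card F ^ n := by
      cases n with
      | zero => simp
      | succ m => rw [Nat.add_sub_cancel, pow_succ]; ring
    rw [hq]
    calc _ ≤ d * Fintype.card F ^ n + n * d * Fintype.card F ^ n := by gcongr
      _ = _ := by ring

/-- **Soundness of the Sum Check Protocol** (LFKN).  If `g¹, …, gˡ` are `M`-variate
polynomials of total degree at most `d`, none of which sums to `c` over the Boolean
cube `{0,1}^M ⊆ F^M`, then for any function `g : F^M → F` and any table of univariate
polynomials of degree at most `d`, the number of points `x ∈ F^M` at which the
Sum Check Protocol accepts and moreover `g(x) = gʲ(x)` for some `j` is at most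
`M · d · l · q^(M-1)`. -/
theorem sum_check_soundness {F : Type*} [Field F] [Fintype F]
    (M d l : ℕ) (hM : 1 ≤ M) (c : F)
    (G : Fin l → MvPolynomial (Fin M) F)
    (hGdeg : ∀ j, (G j).totalDegree ≤ d)
    (hGsum : ∀ j, ∑ b : Fin M → Bool,
      MvPolynomial.eval (fun i => if b i then (1 : F) else 0) (G j) ≠ c)
    (g : (Fin M → F) → F)
    (p : (j : ℕ) → (Fin j → F) → Polynomial F)
    (hpdeg : ∀ j < M, ∀ a : Fin j → F, (p j a).natDegree ≤ d) :
    {x : Fin M → F | SumCheckAccepts M hM p g c x ∧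
        ∃ j : Fin l, g x = MvPolynomial.eval x (G j)}.ncard
      ≤ M * d * l * Fintype.card F ^ (M - 1) := by
  classical
  obtain ⟨n, rfl⟩ : ∃ n, M = n + 1 := ⟨M - 1, by omega⟩
  have hsub : {x : Fin (n + 1) → F | SumCheckAccepts (n + 1) hM p g c x ∧
        ∃ j : Fin l, g x = MvPolynomial.eval x (G j)} ⊆
      ((Finset.univ.biUnion fun j : Fin l => Finset.univ.filter
        (RunAccepts (n + 1) p (fun x => MvPolynomial.eval x (G j)) c) :
          Finset (Fin (n + 1) → F)) : Set (Fin (n + 1) → F)) := by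
    rintro x ⟨hx, j, hj⟩
    simp only [Finset.coe_biUnion, Set.mem_iUnion, Finset.coe_filter]
    exact ⟨j, Finset.mem_univ j, Finset.mem_univ x,
      runAccepts_of_sumCheckAccepts n p g _ c x hx hj⟩
  refine (Set.ncard_le_ncard hsub (Finset.finite_toSet _)).trans ?_
  rw [Set.ncard_coe_finset]
  refine (Finset.card_biUnion_le_card_mul _ _ ((n + 1) * d * Fintype.card F ^ (n + 1 - 1))
    fun j _ => ?_).trans (le_of_eq ?_)
  · convert card_runAccepts_le d (n + 1) p hpdeg _ (lineDegreeLE_eval (G j) (hGdeg j)) c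
      (hGsum j)
  · rw [Finset.card_univ, Fintype.card_fin]; ring
end

section
/- Let F be a field, M ≥ 1 and d natural numbers, c ∈ F, and let g be a multivariate polynomial in M variables over F of total degree at most d with Σ_{b ∈ {0,1}^M} g(b) = c (the sum ranging over all points of F^M whose coordinates lie in {0,1} ⊆ F). Then there exists a table assigning to every 0 ≤ j ≤ M−1 and every (a₁,…,a_j) ∈ F^j a univariate polynomial p_{a₁,…,a_j} over F of degree at most d such that p_{a₁,…,a_j}(z) = Σ_{b_{j+2},…,b_M ∈ {0,1}} g(a₁,…,a_j,z,b_{j+2},…,b_M) for every z ∈ F, and such that for every x ∈ F^M the Sum Check Protocol accepts at x (with this table, the evaluation function of g, and target c). -/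
/-!
The table is forced: `p_a(z)` is obtained by substituting into `g` the constants `a`, the variable
`z`, and Boolean constants, and summing over the Boolean constants. Each substituted entry is a
univariate polynomial of degree at most `1`, so the total degree of `g` bounds the degree
(`MvPolynomial.aeval_natDegree_le`). The first two checks of the protocol split a sum over a Boolean
cube according to its first coordinate (`sum_bool_cube_split`); the last one is the case in which
no Boolean coordinate remains.
-/

open MvPolynomial Polynomial

/-- The point of `F^M` whose first `j` coordinates are `a`, whose `(j+1)`-st
coordinate is `z`, and whose last `M - j - 1` coordinates are the Boolean
values `b` (with `0, 1 ∈ F`). -/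
def splicedPoint {F : Type*} [Field F] (M j : ℕ) (a : Fin j → F) (z : F)
    (b : Fin (M - j - 1) → Bool) : Fin M → F :=
  fun i =>
    if h : (i : ℕ) < j then a ⟨i, h⟩
    else if _h2 : (i : ℕ) = j then z
    else if b ⟨(i : ℕ) - j - 1, by have := i.2; omega⟩ then 1 else 0

/-- `splicedPoint` with the field element `z` replaced by the polynomial variable. -/
noncomputable def splicedPoly {F : Type*} [Field F] (M j : ℕ) (a : Fin j → F)
    (b : Fin (M - j - 1) → Bool) : Fin M → Polynomial F :=
  fun i => if (i : ℕ) = j then Polynomial.X else Polynomial.C (splicedPoint M j a 0 b i)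

/-- The prover's polynomial for the prefix `a`: the partial sum of `g` over the remaining Boolean
coordinates, as a polynomial in the coordinate of index `j`. -/
noncomputable def partialSumPoly {F : Type*} [Field F] (M : ℕ) (g : MvPolynomial (Fin M) F)
    (j : ℕ) (a : Fin j → F) : Polynomial F :=
  ∑ b : Fin (M - j - 1) → Bool, MvPolynomial.aeval (splicedPoly M j a b) g

lemma partialSumPoly_natDegree_le {F : Type*} [Field F] {M d : ℕ} {g : MvPolynomial (Fin M) F}
    (hg : g.totalDegree ≤ d) (j : ℕ) (a : Fin j → F) :
    (partialSumPoly M g j a).natDegree ≤ d := by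
  refine Polynomial.natDegree_sum_le_of_forall_le _ _ fun b _ => ?_
  have h := MvPolynomial.aeval_natDegree_le g hg (splicedPoly M j a b) (n := 1) fun i => by
    unfold splicedPoly
    split_ifs <;> simp
  simpa using h

lemma partialSumPoly_eval {F : Type*} [Field F] (M : ℕ) (g : MvPolynomial (Fin M) F)
    (j : ℕ) (a : Fin j → F) (z : F) :
    (partialSumPoly M g j a).eval z =
      ∑ b : Fin (M - j - 1) → Bool, MvPolynomial.eval (splicedPoint M j a z b) g := by
  rw [partialSumPoly, Polynomial.eval_finsetSum]
  refine Finset.sum_congr rfl fun b _ => ?_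
  rw [← Polynomial.coe_evalRingHom, MvPolynomial.aeval_def, MvPolynomial.hom_eval₂,
    ← MvPolynomial.eval₂_id]
  congr 1
  · ext r
    simp
  · funext i
    by_cases h : (i : ℕ) = j <;> simp [splicedPoly, splicedPoint, h]

/-- Splits a sum over a Boolean cube by the first coordinate. The dimensions are related by a
propositional equality, and the summand is given in terms of head and tail, because the cubes of
consecutive rounds have dimensions `M - t - 1` and `M - (t + 1) - 1`. -/
lemma sum_bool_cube_split {R : Type*} [AddCommMonoid R] {n m : ℕ} (h : n = m + 1)
    (f : (Fin n → Bool) → R) (G : Bool → (Fin m → Bool) → R)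
    (hfG : ∀ b, f b = G (b ⟨0, by omega⟩) fun i => b ⟨i + 1, by omega⟩) :
    ∑ b, f b = ∑ b, G false b + ∑ b, G true b := by
  subst h
  rw [← (Fin.consEquiv fun _ : Fin (m + 1) => Bool).sum_comp, Fintype.sum_prod_type,
    Fintype.sum_bool, add_comm]
  congr 1 <;> refine Finset.sum_congr rfl fun b _ => (hfG _).trans ?_ <;> rfl


/-- **Completeness of the Sum Check Protocol.**  If `g` is an `M`-variate polynomial
of total degree at most `d` whose sum over the Boolean cube `{0,1}^M ⊆ F^M` equals
`c`, then there is a table of univariate polynomials of degree at most `d` whose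
entries are the partial sums of `g`, and with which the Sum Check Protocol accepts
at every point `x ∈ F^M`. -/
theorem sum_check_completeness {F : Type*} [Field F]
    (M d : ℕ) (hM : 1 ≤ M) (c : F)
    (g : MvPolynomial (Fin M) F) (hgdeg : g.totalDegree ≤ d)
    (hgsum : ∑ b : Fin M → Bool,
      MvPolynomial.eval (fun i => if b i then (1 : F) else 0) g = c) :
    ∃ p : (j : ℕ) → (Fin j → F) → Polynomial F,
      (∀ j < M, ∀ a : Fin j → F, (p j a).natDegree ≤ d) ∧
      (∀ j < M, ∀ a : Fin j → F, ∀ z : F,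
        (p j a).eval z = ∑ b : Fin (M - j - 1) → Bool,
          MvPolynomial.eval (splicedPoint M j a z b) g) ∧
      (∀ x : Fin M → F,
        SumCheckAccepts M hM p (fun y => MvPolynomial.eval y g) c x) := by
  refine ⟨partialSumPoly M g, fun j _ a => partialSumPoly_natDegree_le hgdeg j a,
    fun j _ a z => partialSumPoly_eval M g j a z, fun x => ⟨?_, fun t ht => ?_, ?_⟩⟩
  · rw [partialSumPoly_eval, partialSumPoly_eval, ← hgsum]
    symm
    refine sum_bool_cube_split (by omega) _ (fun v b => MvPolynomial.eval
      (splicedPoint M 0 (fun s => s.elim0) (if v then 1 else 0) b) g) fun b => ?_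
    congr 2
    funext i
    by_cases h : (i : ℕ) = 0
    · obtain rfl : i = ⟨0, hM⟩ := Fin.ext h
      simp [splicedPoint]
    · have hi : (i : ℕ) - 0 - 1 + 1 = i := by omega
      simp only [splicedPoint, h, hi, Nat.not_lt_zero, dite_false]
  · have htM : t < M := by omega
    have htM' : t + 1 < M := by omega
    rw [partialSumPoly_eval, partialSumPoly_eval, partialSumPoly_eval]
    refine sum_bool_cube_split (by omega) _ (fun v b => MvPolynomial.eval
      (splicedPoint M (t + 1) (fun s => x ⟨s, by omega⟩) (if v then 1 else 0) b) g) fun b => ?_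
    congr 2
    funext i
    rcases lt_trichotomy (i : ℕ) t with h | h | h
    · simp [splicedPoint, h, Nat.lt_succ_of_lt h]
    · obtain rfl : i = ⟨t, htM⟩ := Fin.ext h
      simp [splicedPoint]
    · by_cases h' : (i : ℕ) = t + 1
      · obtain rfl : i = ⟨t + 1, htM'⟩ := Fin.ext h'
        simp [splicedPoint]
      · have h1 : ¬ (i : ℕ) < t := by omega
        have h2 : ¬ (i : ℕ) = t := by omega
        have h3 : ¬ (i : ℕ) < t + 1 := by omega
        have hi : (i : ℕ) - (t + 1) - 1 + 1 = i - t - 1 := by omega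
        simp only [splicedPoint, h1, h2, h3, h', hi, dite_false]
  · have hM1 : M - 1 < M := by omega
    rw [partialSumPoly_eval]
    have hpt : ∀ b, splicedPoint M (M - 1) (fun s => x ⟨s, by omega⟩) (x ⟨M - 1, by omega⟩) b
        = x := by
      intro b
      funext i
      by_cases h : (i : ℕ) < M - 1
      · simp [splicedPoint, h]
      · obtain rfl : i = ⟨M - 1, hM1⟩ := Fin.ext (by simp only; omega)
        simp [splicedPoint]
    have h0 : M - (M - 1) - 1 = 0 := by omega
    simp only [hpt, Finset.sum_const, Finset.card_univ, Fintype.card_fun, Fintype.card_fin, h0,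
      pow_zero, one_smul]
end
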